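/- Let $d \ge 2$ be an integer. Let $\sigma_p$ be a positive Borel measure on $(0, \infty)$ with $\sigma_p((0,r]) < \infty$ for every $r > 0$, tempered in the sense that there exist $C, N > 0$ with $\sigma_p((0,r]) \le C(1+r)^N$ for all $r \ge 1$, and let $\sigma_c$ be a finite positive Borel measure on the interval $[0, \tfrac{d-1}{2}]$. Then the following are equivalent: (a) $\sigma_c = 0$ and $\lim_{\varepsilon \to 0^+} \sigma_p((0,\varepsilon])/\varepsilon^3 = 0$; (b) $\lim_{\tau \to +\infty} \tau^{3/2}\Big(\int_{(0,\infty)} e^{-2\tau\lambda^2}\, d\sigma_p(\lambda) + \int_{[0, \frac{d-1}{2}]} e^{2\tau\lambda^2}\, d\sigma_c(\lambda)\Big) = 0$. -/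

import Mathlib

open MeasureTheory Filter

/-!
For the forward implication split `∫ e^{-2τλ²} dσ` at a small `δ`. If `σ((0,r]) ≤ c r^α` for
`r ≤ δ`, cutting `(0,δ]` into shells of width `τ^{-1/2}` bounds the low frequency part by
`c K τ^{-α/2}` with `K` independent of `c`, `δ` and `τ`. The high frequency part is finite by
polynomial growth and then decays like `e^{-2τδ²}`. Conversely, Markov's inequality at `τ = ε⁻²`
gives `σ((0,ε]) ≤ e² ∫ e^{-2τλ²} dσ`. The complementary series weight `e^{2τλ²}` is at least `1`, so
it is compatible with decay only if it sees no mass.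
-/

section SpectralDecay

open Set Asymptotics
open scoped ENNReal Topology

variable {σ : Measure ℝ}

/-- The principal series part `∫_{(0,∞)} e^{-2τλ²} dσ(λ)` of the variance of the linear statistic of
the heat kernel at time `τ`, without the factor `e^{-(d-1)²τ/2}`. It is `[0,∞]`-valued, so that no
integrability has to be assumed. -/
noncomputable def heatIntegral (σ : Measure ℝ) (τ : ℝ) : ℝ≥0∞ :=
  ∫⁻ l in Ioi (0 : ℝ), ENNReal.ofReal (Real.exp (-2 * τ * l ^ 2)) ∂σ

/-- The constant `∑ e^{-2n²} (n+1)^α` that bounds `τ^{α/2} ∫ e^{-2τλ²} dσ` when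
`σ((0,r]) ≤ r^α` for all `r > 0`. -/
noncomputable def shellSum (α : ℝ) : ℝ≥0∞ :=
  ∑' n : ℕ, ENNReal.ofReal (Real.exp (-2 * (n : ℝ) ^ 2) * ((n : ℝ) + 1) ^ α)

lemma summable_exp_neg_mul_sq_mul_rpow {b : ℝ} (hb : 0 < b) (a p : ℝ) :
    Summable fun n : ℕ => Real.exp (-b * (n : ℝ) ^ 2) * ((n : ℝ) + a) ^ p := by
  have hgauss : (fun n : ℕ => Real.exp (-b * (n : ℝ) ^ 2)) =O[atTop]
      fun n : ℕ => Real.exp (-b * n) :=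
    .of_norm_le fun n => by
      have hn : (n : ℝ) ≤ (n : ℝ) ^ 2 := by exact_mod_cast Nat.le_self_pow two_ne_zero n
      rw [Real.norm_of_nonneg (Real.exp_pos _).le, Real.exp_le_exp]
      nlinarith
  have hpow : (fun n : ℕ => ((n : ℝ) + a) ^ p) =O[atTop] fun n : ℕ => Real.exp (b / 2 * (n + a)) :=
    (isLittleO_rpow_exp_pos_mul_atTop p (half_pos hb)).isBigO.comp_tendsto
      (tendsto_atTop_add_const_right _ a tendsto_natCast_atTop_atTop)
  have hgeom : Summable fun n : ℕ => Real.exp (b / 2 * a) * Real.exp (n * (-(b / 2))) :=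
    (Real.summable_exp_nat_mul_iff.2 (by linarith)).mul_left _
  refine summable_of_isBigO_nat hgeom ((hgauss.mul hpow).congr_right fun n => ?_)
  rw [← Real.exp_add, ← Real.exp_add]
  ring_nf

lemma shellSum_ne_top (α : ℝ) : shellSum α ≠ ∞ :=
  (summable_exp_neg_mul_sq_mul_rpow two_pos 1 α).tsum_ofReal_ne_top

lemma Ioi_zero_subset_iUnion_Ioc_mul {s : ℝ} (hs : 0 < s) :
    Ioi 0 ⊆ ⋃ n : ℕ, Ioc ((n : ℝ) * s) (((n : ℝ) + 1) * s) := by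
  intro x (hx : 0 < x)
  obtain ⟨n, hn⟩ := Nat.exists_eq_add_one.2 (Nat.ceil_pos.2 (div_pos hx hs))
  obtain ⟨hlt, hle⟩ := (Nat.ceil_eq_iff n.succ_ne_zero).1 hn
  rw [Nat.succ_sub_one, lt_div_iff₀ hs] at hlt
  rw [div_le_iff₀ hs, Nat.cast_succ] at hle
  exact mem_iUnion.2 ⟨n, hlt, hle⟩

lemma setLIntegral_Ioi_le_tsum_of_antitoneOn {f : ℝ → ℝ≥0∞} (hf : AntitoneOn f (Ici 0))
    {s : ℝ} (hs : 0 < s) :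
    ∫⁻ x in Ioi 0, f x ∂σ ≤ ∑' n : ℕ, f (n * s) * σ (Ioc 0 (((n : ℝ) + 1) * s)) := by
  refine (lintegral_mono_set (Ioi_zero_subset_iUnion_Ioc_mul hs)).trans
    ((lintegral_iUnion_le _ _).trans (ENNReal.tsum_le_tsum fun n => ?_))
  have hns : 0 ≤ (n : ℝ) * s := by positivity
  calc ∫⁻ x in Ioc (n * s) ((n + 1) * s), f x ∂σ
      ≤ ∫⁻ _ in Ioc (n * s) ((n + 1) * s), f (n * s) ∂σ :=
        setLIntegral_mono measurable_const fun x hx => hf hns (hns.trans hx.1.le) hx.1.le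
    _ = f (n * s) * σ (Ioc (n * s) ((n + 1) * s)) := setLIntegral_const _ _
    _ ≤ f (n * s) * σ (Ioc 0 ((n + 1) * s)) := by gcongr

lemma heatIntegral_le_tsum {s τ : ℝ} (hs : 0 < s) (hτ : 0 ≤ τ) :
    heatIntegral σ τ ≤ ∑' n : ℕ, ENNReal.ofReal (Real.exp (-2 * τ * (n * s) ^ 2)) *
      σ (Ioc 0 (((n : ℝ) + 1) * s)) := by
  refine setLIntegral_Ioi_le_tsum_of_antitoneOn (fun x (hx : 0 ≤ x) y _ hxy => ?_) hs
  apply ENNReal.ofReal_le_ofReal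
  rw [Real.exp_le_exp, neg_mul, neg_mul, neg_mul, neg_le_neg_iff]
  gcongr

lemma heatIntegral_ne_top_of_tempered {C N : ℝ}
    (hσ : ∀ r : ℝ, 1 ≤ r → σ (Ioc 0 r) ≤ ENNReal.ofReal (C * (1 + r) ^ N)) {τ : ℝ} (hτ : 0 < τ) :
    heatIntegral σ τ ≠ ∞ := by
  have hsum : Summable fun n : ℕ => C * (Real.exp (-(2 * τ) * (n : ℝ) ^ 2) * ((n : ℝ) + 2) ^ N) :=
    (summable_exp_neg_mul_sq_mul_rpow (by positivity) 2 N).mul_left C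
  refine ne_top_of_le_ne_top hsum.tsum_ofReal_ne_top
    ((heatIntegral_le_tsum one_pos hτ.le).trans (ENNReal.tsum_le_tsum fun n => ?_))
  rw [mul_one, mul_one]
  calc ENNReal.ofReal (Real.exp (-2 * τ * (n : ℝ) ^ 2)) * σ (Ioc 0 ((n : ℝ) + 1))
      ≤ ENNReal.ofReal (Real.exp (-2 * τ * (n : ℝ) ^ 2)) *
          ENNReal.ofReal (C * (1 + ((n : ℝ) + 1)) ^ N) := by
        gcongr
        exact hσ _ (by linarith [n.cast_nonneg (α := ℝ)])
    _ = ENNReal.ofReal (C * (Real.exp (-(2 * τ) * (n : ℝ) ^ 2) * ((n : ℝ) + 2) ^ N)) := by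
        rw [← ENNReal.ofReal_mul (Real.exp_pos _).le]
        ring_nf

lemma rpow_mul_heatIntegral_le {α τ : ℝ} {c : ℝ≥0∞}
    (hσ : ∀ r : ℝ, 0 < r → σ (Ioc 0 r) ≤ c * ENNReal.ofReal (r ^ α)) (hτ : 0 < τ) :
    ENNReal.ofReal (τ ^ (α / 2)) * heatIntegral σ τ ≤ c * shellSum α := by
  have hsq : τ * (√τ)⁻¹ ^ 2 = 1 := by
    rw [inv_pow, Real.sq_sqrt hτ.le, mul_inv_cancel₀ hτ.ne']
  have hpow : τ ^ (α / 2) * (√τ)⁻¹ ^ α = 1 := by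
    rw [Real.inv_rpow (Real.sqrt_nonneg τ), Real.sqrt_eq_rpow, ← Real.rpow_mul hτ.le,
      one_div_mul_eq_div, mul_inv_cancel₀ (Real.rpow_pos_of_pos hτ _).ne']
  rw [shellSum, ← ENNReal.tsum_mul_left]
  grw [heatIntegral_le_tsum (inv_pos.2 (Real.sqrt_pos.2 hτ)) hτ.le, ← ENNReal.tsum_mul_left]
  refine ENNReal.tsum_le_tsum fun n => ?_
  have hexp : -2 * τ * (n * (√τ)⁻¹) ^ 2 = -2 * (n : ℝ) ^ 2 := by
    linear_combination -2 * (n : ℝ) ^ 2 * hsq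
  have hscale : τ ^ (α / 2) * (((n : ℝ) + 1) * (√τ)⁻¹) ^ α = ((n : ℝ) + 1) ^ α := by
    rw [Real.mul_rpow (by positivity) (by positivity), mul_left_comm, hpow, mul_one]
  grw [hexp, hσ _ (by positivity), ← hscale, ENNReal.ofReal_mul (Real.exp_pos _).le,
    ENNReal.ofReal_mul (by positivity)]
  exact le_of_eq (by ring)

lemma heatIntegral_restrict_Iic_add_restrict_Ioi (δ τ : ℝ) :
    heatIntegral (σ.restrict (Iic δ)) τ + heatIntegral (σ.restrict (Ioi δ)) τ =
      heatIntegral σ τ := by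
  simp only [heatIntegral]
  rw [← lintegral_add_measure, ← Measure.restrict_add, ← compl_Iic,
    Measure.restrict_add_restrict_compl measurableSet_Iic]

lemma exists_restrict_Iic_growth {α : ℝ} (hα : 0 ≤ α) {c : ℝ≥0∞}
    (hσ : ∀ᶠ r in 𝓝[>] 0, σ (Ioc 0 r) ≤ c * ENNReal.ofReal (r ^ α)) :
    ∃ δ > 0, ∀ r : ℝ, 0 < r → σ.restrict (Iic δ) (Ioc 0 r) ≤ c * ENNReal.ofReal (r ^ α) := by
  obtain ⟨δ, hδ, hσδ⟩ := mem_nhdsGT_iff_exists_Ioc_subset.1 hσ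
  refine ⟨δ, hδ, fun r hr => ?_⟩
  have hmin : 0 < min r δ := lt_min hr hδ
  rw [Measure.restrict_apply measurableSet_Ioc, Ioc_inter_Iic]
  calc σ (Ioc 0 (min r δ)) ≤ c * ENNReal.ofReal (min r δ ^ α) := hσδ ⟨hmin, min_le_right r δ⟩
    _ ≤ c * ENNReal.ofReal (r ^ α) := by grw [min_le_left r δ]

lemma heatIntegral_restrict_Ioi_le {δ τ₀ τ : ℝ} (hδ : 0 ≤ δ) (hτ : τ₀ ≤ τ) :
    heatIntegral (σ.restrict (Ioi δ)) τ ≤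
      ENNReal.ofReal (Real.exp (-2 * (τ - τ₀) * δ ^ 2)) * heatIntegral σ τ₀ := by
  rw [heatIntegral, heatIntegral, Measure.restrict_restrict measurableSet_Ioi, Ioi_inter_Ioi,
    sup_eq_right.2 hδ, ← lintegral_const_mul' _ _ ENNReal.ofReal_ne_top]
  refine (setLIntegral_mono' measurableSet_Ioi fun l (hl : δ < l) => ?_).trans
    (lintegral_mono_set (Ioi_subset_Ioi hδ))
  rw [← ENNReal.ofReal_mul (Real.exp_pos _).le, ← Real.exp_add]
  have hsq : (τ - τ₀) * δ ^ 2 ≤ (τ - τ₀) * l ^ 2 := by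
    have := sub_nonneg.2 hτ
    gcongr
  exact ENNReal.ofReal_le_ofReal (Real.exp_le_exp.2 (by linarith))

lemma tendsto_rpow_mul_heatIntegral_restrict_Ioi {δ : ℝ} (hδ : 0 < δ)
    (hfin : ∃ τ, heatIntegral σ τ ≠ ∞) (p : ℝ) :
    Tendsto (fun τ : ℝ => ENNReal.ofReal (τ ^ p) * heatIntegral (σ.restrict (Ioi δ)) τ)
      atTop (𝓝 0) := by
  obtain ⟨τ₀, hτ₀⟩ := hfin
  have hdecay : Tendsto (fun τ : ℝ => τ ^ p * Real.exp (-2 * (τ - τ₀) * δ ^ 2)) atTop (𝓝 0) := by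
    have := (tendsto_rpow_mul_exp_neg_mul_atTop_nhds_zero p (2 * δ ^ 2)
      (by positivity)).mul_const (Real.exp (2 * τ₀ * δ ^ 2))
    rw [zero_mul] at this
    refine this.congr fun τ => ?_
    rw [mul_assoc, ← Real.exp_add]
    ring_nf
  have hbound := ENNReal.Tendsto.mul_const (b := heatIntegral σ τ₀)
    (ENNReal.tendsto_ofReal hdecay) (Or.inr hτ₀)
  rw [ENNReal.ofReal_zero, zero_mul] at hbound
  refine tendsto_of_tendsto_of_tendsto_of_le_of_le' tendsto_const_nhds hbound
    (.of_forall fun _ => zero_le) ?_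
  filter_upwards [eventually_ge_atTop τ₀, eventually_ge_atTop 0] with τ hτ hτ0
  rw [ENNReal.ofReal_mul (by positivity), mul_assoc]
  grw [heatIntegral_restrict_Ioi_le hδ.le hτ]

lemma tendsto_rpow_mul_heatIntegral {α : ℝ} (hα : 0 ≤ α) (hfin : ∃ τ, heatIntegral σ τ ≠ ∞)
    (hσ : Tendsto (fun ε : ℝ => σ (Ioc 0 ε) / ENNReal.ofReal (ε ^ α)) (𝓝[>] 0) (𝓝 0)) :
    Tendsto (fun τ : ℝ => ENNReal.ofReal (τ ^ (α / 2)) * heatIntegral σ τ) atTop (𝓝 0) := by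
  refine ENNReal.tendsto_nhds_zero.2 fun η hη => ?_
  have hη2 : η / 2 ≠ 0 := (ENNReal.half_pos hη.ne').ne'
  obtain ⟨c, hc, hcη⟩ := ENNReal.exists_nnreal_pos_mul_lt (shellSum_ne_top α) hη2
  have hgrowth : ∀ᶠ r in 𝓝[>] 0, σ (Ioc 0 r) ≤ c * ENNReal.ofReal (r ^ α) := by
    filter_upwards [ENNReal.tendsto_nhds_zero.1 hσ c (by exact_mod_cast hc), self_mem_nhdsWithin]
      with r hr (hr0 : 0 < r)
    exact (ENNReal.div_le_iff (by positivity) ENNReal.ofReal_ne_top).1 hr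
  obtain ⟨δ, hδ, hσδ⟩ := exists_restrict_Iic_growth hα hgrowth
  filter_upwards [eventually_gt_atTop 0, ENNReal.tendsto_nhds_zero.1
    (tendsto_rpow_mul_heatIntegral_restrict_Ioi hδ hfin (α / 2)) _ hη2.bot_lt] with τ hτ hhigh
  rw [← heatIntegral_restrict_Iic_add_restrict_Ioi δ, mul_add, ← ENNReal.add_halves η]
  exact add_le_add ((rpow_mul_heatIntegral_le hσδ hτ).trans hcη.le) hhigh

lemma measure_Ioc_le_exp_mul_heatIntegral {τ : ℝ} (hτ : 0 ≤ τ) (r : ℝ) :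
    σ (Ioc 0 r) ≤ ENNReal.ofReal (Real.exp (2 * τ * r ^ 2)) * heatIntegral σ τ := by
  rw [heatIntegral, ← lintegral_const_mul' _ _ ENNReal.ofReal_ne_top, ← setLIntegral_one]
  refine (setLIntegral_mono' measurableSet_Ioc fun l hl => ?_).trans
    (lintegral_mono_set Ioc_subset_Ioi_self)
  have hsq : τ * l ^ 2 ≤ τ * r ^ 2 := by
    have := hl.1.le
    gcongr
    exact hl.2
  rw [← ENNReal.ofReal_mul (Real.exp_pos _).le, ← Real.exp_add, ENNReal.one_le_ofReal]
  exact Real.one_le_exp (by linarith)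

lemma tendsto_measure_Ioc_div_rpow {α : ℝ}
    (h : Tendsto (fun τ : ℝ => ENNReal.ofReal (τ ^ (α / 2)) * heatIntegral σ τ) atTop (𝓝 0)) :
    Tendsto (fun ε : ℝ => σ (Ioc 0 ε) / ENNReal.ofReal (ε ^ α)) (𝓝[>] 0) (𝓝 0) := by
  have hτ : Tendsto (fun ε : ℝ => ε⁻¹ ^ 2) (𝓝[>] 0) atTop :=
    (tendsto_pow_atTop two_ne_zero).comp tendsto_inv_nhdsGT_zero
  have hbound := ENNReal.Tendsto.const_mul (a := ENNReal.ofReal (Real.exp 2)) (h.comp hτ)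
    (Or.inr ENNReal.ofReal_ne_top)
  rw [mul_zero] at hbound
  refine tendsto_of_tendsto_of_tendsto_of_le_of_le' tendsto_const_nhds hbound
    (.of_forall fun _ => zero_le) ?_
  filter_upwards [self_mem_nhdsWithin] with ε (hε : 0 < ε)
  have hexp : 2 * ε⁻¹ ^ 2 * ε ^ 2 = 2 := by field_simp
  have hpow : (ε⁻¹ ^ 2) ^ (α / 2) = (ε ^ α)⁻¹ := by
    rw [← Real.rpow_natCast, ← Real.rpow_mul (by positivity), Nat.cast_ofNat,
      mul_div_cancel₀ _ two_ne_zero, Real.inv_rpow hε.le]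
  grw [measure_Ioc_le_exp_mul_heatIntegral (sq_nonneg ε⁻¹) ε, hexp, Function.comp_apply, hpow,
    ENNReal.ofReal_inv_of_pos (by positivity), ENNReal.div_eq_inv_mul, mul_left_comm]

lemma tendsto_toReal_measure_Ioc_div_rpow_iff (hσ : ∀ r : ℝ, σ (Ioc 0 r) ≠ ∞) (α : ℝ) :
    Tendsto (fun ε : ℝ => (σ (Ioc 0 ε)).toReal / ε ^ α) (𝓝[>] 0) (𝓝 0) ↔
      Tendsto (fun ε : ℝ => σ (Ioc 0 ε) / ENNReal.ofReal (ε ^ α)) (𝓝[>] 0) (𝓝 0) := by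
  have hofReal : (fun ε : ℝ => σ (Ioc 0 ε) / ENNReal.ofReal (ε ^ α)) =ᶠ[𝓝[>] 0]
      fun ε => ENNReal.ofReal ((σ (Ioc 0 ε)).toReal / ε ^ α) := by
    filter_upwards [self_mem_nhdsWithin] with ε (hε : 0 < ε)
    rw [ENNReal.ofReal_div_of_pos (by positivity), ENNReal.ofReal_toReal (hσ ε)]
  rw [tendsto_congr' hofReal,
    ← ENNReal.tendsto_toReal_zero_iff (fun _ => ENNReal.ofReal_ne_top)]
  refine tendsto_congr' ?_
  filter_upwards [self_mem_nhdsWithin] with ε (hε : 0 < ε)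
  exact (ENNReal.toReal_ofReal (by positivity)).symm

lemma tendsto_rpow_mul_lintegral_exp_iff {p : ℝ} (hp : 0 ≤ p) {ν : Measure ℝ} {S : Set ℝ} :
    Tendsto (fun τ : ℝ => ENNReal.ofReal (τ ^ p) *
      ∫⁻ l in S, ENNReal.ofReal (Real.exp (2 * τ * l ^ 2)) ∂ν) atTop (𝓝 0) ↔ ν S = 0 := by
  refine ⟨fun h => le_antisymm (ge_of_tendsto h ?_) zero_le, fun h => ?_⟩
  · filter_upwards [eventually_ge_atTop 1] with τ hτ
    have hpow : 1 ≤ ENNReal.ofReal (τ ^ p) := ENNReal.one_le_ofReal.2 (Real.one_le_rpow hτ hp)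
    rw [← setLIntegral_one]
    refine (lintegral_mono fun l => ?_).trans (le_mul_of_one_le_left zero_le hpow)
    exact ENNReal.one_le_ofReal.2 (Real.one_le_exp (by positivity))
  · simp only [setLIntegral_measure_zero _ _ h, mul_zero, tendsto_const_nhds]

lemma tendsto_add_nhds_zero_iff {ι : Type*} {f g : ι → ℝ≥0∞} {F : Filter ι} :
    Tendsto (fun i => f i + g i) F (𝓝 0) ↔ Tendsto f F (𝓝 0) ∧ Tendsto g F (𝓝 0) := by
  refine ⟨fun h => ⟨?_, ?_⟩, fun h => by simpa only [add_zero] using h.1.add h.2⟩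
  · exact tendsto_of_tendsto_of_tendsto_of_le_of_le tendsto_const_nhds h
      (fun _ => zero_le) fun _ => le_self_add
  · exact tendsto_of_tendsto_of_tendsto_of_le_of_le tendsto_const_nhds h
      (fun _ => zero_le) fun _ => le_add_self

theorem stmt13_general {α : ℝ} (hα : 0 ≤ α) (hfin : ∀ᶠ τ in atTop, heatIntegral σ τ ≠ ∞)
    {ν : Measure ℝ} {S : Set ℝ} (hν : ν Sᶜ = 0) :
    (ν = 0 ∧ Tendsto (fun ε : ℝ => (σ (Ioc 0 ε)).toReal / ε ^ α) (𝓝[>] 0) (𝓝 0)) ↔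
      Tendsto (fun τ : ℝ => ENNReal.ofReal (τ ^ (α / 2)) * (heatIntegral σ τ +
        ∫⁻ l in S, ENNReal.ofReal (Real.exp (2 * τ * l ^ 2)) ∂ν)) atTop (𝓝 0) := by
  obtain ⟨τ₀, hτ₀_fin, hτ₀⟩ := (hfin.and (eventually_ge_atTop 0)).exists
  have hσ (r : ℝ) : σ (Ioc 0 r) ≠ ∞ :=
    ne_top_of_le_ne_top (by finiteness) (measure_Ioc_le_exp_mul_heatIntegral hτ₀ r)
  have hzero : ν = 0 ↔ ν S = 0 :=
    ⟨fun h => by simp [h], fun h => Measure.measure_univ_eq_zero.1 <|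
      union_compl_self S ▸ measure_union_null h hν⟩
  simp only [mul_add]
  rw [tendsto_add_nhds_zero_iff, tendsto_rpow_mul_lintegral_exp_iff (by positivity), hzero,
    and_comm, tendsto_toReal_measure_Ioc_div_rpow_iff hσ]
  exact and_congr_left'
    ⟨tendsto_rpow_mul_heatIntegral hα ⟨τ₀, hτ₀_fin⟩, tendsto_measure_Ioc_div_rpow⟩

end SpectralDecay

/-- Let `d ≥ 2`, `σ_p` a tempered positive Borel measure on `(0,∞)` and
`σ_c` a finite positive Borel measure on `[0,(d-1)/2]`. Then the following are equivalent:
(a) `σ_c = 0` and `σ_p((0,ε])/ε³ → 0` as `ε → 0⁺` (spectral hyperuniformity);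
(b) `τ^{3/2} (∫ e^{-2τλ²} dσ_p(λ) + ∫ e^{2τλ²} dσ_c(λ)) → 0` as `τ → +∞`
(heat kernel hyperuniformity), the integrals being taken in `[0,∞]`. -/
theorem stmt13 (d : ℕ) (hd : 2 ≤ d)
    (σp : Measure ℝ) (hp0 : σp (Set.Iic 0) = 0)
    (hpfin : ∀ r : ℝ, 0 < r → σp (Set.Ioc 0 r) < ⊤)
    (hptemp : ∃ C N : ℝ, 0 < C ∧ 0 < N ∧
      ∀ r : ℝ, 1 ≤ r → σp (Set.Ioc 0 r) ≤ ENNReal.ofReal (C * (1 + r) ^ N))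
    (σc : Measure ℝ) [IsFiniteMeasure σc]
    (hcsupp : σc ((Set.Icc (0 : ℝ) (((d : ℝ) - 1) / 2))ᶜ) = 0) :
    (σc = 0 ∧
        Tendsto (fun ε : ℝ => (σp (Set.Ioc 0 ε)).toReal / ε ^ 3)
          (nhdsWithin 0 (Set.Ioi 0)) (nhds 0)) ↔
      Tendsto (fun τ : ℝ =>
          ENNReal.ofReal (τ ^ (3 / 2 : ℝ)) *
            ((∫⁻ l in Set.Ioi (0 : ℝ), ENNReal.ofReal (Real.exp (-2 * τ * l ^ 2)) ∂σp) +
              ∫⁻ l in Set.Icc (0 : ℝ) (((d : ℝ) - 1) / 2),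
                ENNReal.ofReal (Real.exp (2 * τ * l ^ 2)) ∂σc))
        atTop (nhds 0) := by
  obtain ⟨C, N, -, -, hCN⟩ := hptemp
  simpa only [Real.rpow_ofNat] using! stmt13_general (by norm_num : (0 : ℝ) ≤ 3)
    ((eventually_gt_atTop 0).mono fun _ => heatIntegral_ne_top_of_tempered hCN) hcsupp
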